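/- Let X be a stable set of functions on Ω. Then the collection P(X) of all conditional subsets of X, ordered by conditional inclusion ⊑, is a complete, complemented, distributive lattice; consequently, equipped with the lattice supremum ⊔ (conditional union), infimum ⊓ (conditional intersection), complementation (·)^⊏ (conditional complement), least element {∗} = X|∅ and greatest element X, P(X) is a complete Boolean algebra. -/

import Mathlib

/-!
Common framework for conditional set theory and conditional measure theory
in the sense of Drapeau–Jamneshan–Karliczek–Kupper, specialized to the
measure algebra associated to a probability space `(Ω, F, P)`.

Functions on `Ω` are identified when they agree `P`-a.s., and measurable sets
are identified when their symmetric difference is a null set.  Conditional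
subsets of a stable set `X` are represented by raw pairs `(V, A)` consisting of
a set of functions and a (measurable) base set; all notions are formulated with
respect to the almost-sure identifications via the relations `cle` and `ceq`.
-/

open MeasureTheory Filter Set Topology
open scoped ENNReal

noncomputable section

namespace CondMT

variable {Ω E F' : Type*}

/-- A countable partition of `Ω` into measurable sets (modulo `P`-null sets). -/
structure Partition {Ω : Type*} (mΩ : MeasurableSpace Ω) (P : @Measure Ω mΩ) where
  part : ℕ → Set Ω
  meas : ∀ k, MeasurableSet[mΩ] (part k)
  disj : ∀ i j, i ≠ j → P (part i ∩ part j) = 0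
  cover : P ((⋃ k, part k)ᶜ) = 0

variable {mΩ : MeasurableSpace Ω}

open Classical in
/-- The concatenation `∑ x_k|A_k` of a sequence of functions along a partition:
the (a.s. unique) function equal to `x_k` on `A_k` for every `k`. -/
def Partition.concat {P : @Measure Ω mΩ} (A : Partition mΩ P) (x : ℕ → Ω → E) : Ω → E :=
  fun ω => if h : ∃ k, ω ∈ A.part k then x (Nat.find h) ω else x 0 ω

/-- A stable set of functions on `Ω`: nonempty, closed under a.s. modification and
closed under countable concatenations along partitions. -/
def Stable (P : @Measure Ω mΩ) (X : Set (Ω → E)) : Prop :=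
  X.Nonempty ∧ (∀ x ∈ X, ∀ y, x =ᵐ[P] y → y ∈ X) ∧
    ∀ (A : Partition mΩ P) (x : ℕ → Ω → E), (∀ k, x k ∈ X) → A.concat x ∈ X

/-- Raw data of a conditional subset `V|A`: the carrier `V` and the base set `A`. -/
abbrev CondRaw (Ω E : Type*) := Set (Ω → E) × Set Ω

/-- `S` represents a conditional subset of the stable set `X`: the carrier is a
stable subset of `X` and the base is measurable. -/
def IsCond (P : @Measure Ω mΩ) (X : Set (Ω → E)) (S : CondRaw Ω E) : Prop :=
  Stable P S.1 ∧ S.1 ⊆ X ∧ MeasurableSet[mΩ] S.2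

/-- Conditional inclusion `V|A ⊑ W|B`: `A ⊆ B` a.s., and every `x|A`, `x ∈ V`,
coincides a.s. on `A` with some `y|A`, `y ∈ W`. -/
def cle (P : @Measure Ω mΩ) (S T : CondRaw Ω E) : Prop :=
  P (S.2 \ T.2) = 0 ∧ ∀ x ∈ S.1, ∃ y ∈ T.1, ∀ᵐ ω ∂P, ω ∈ S.2 → x ω = y ω

/-- Identification of conditional subsets (equality in the conditional power set). -/
def ceq (P : @Measure Ω mΩ) (S T : CondRaw Ω E) : Prop := cle P S T ∧ cle P T S

/-- `x|C ∈ V|C`: the restriction of `x` to `C` agrees a.s. on `C` with an element of `V`. -/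
def memOn (P : @Measure Ω mΩ) (C : Set Ω) (x : Ω → E) (V : Set (Ω → E)) : Prop :=
  ∃ y ∈ V, ∀ᵐ ω ∂P, ω ∈ C → x ω = y ω

/-- `∑ V_k|A_k`, the set of concatenations of sequences taken from the `V_k`. -/
def concatSet (P : @Measure Ω mΩ) (A : Partition mΩ P) (V : ℕ → Set (Ω → E)) :
    Set (Ω → E) :=
  {f | ∃ x : ℕ → Ω → E, (∀ k, x k ∈ V k) ∧ f =ᵐ[P] A.concat x}

/-- Countable concatenation `∑ (V_k|B_k)|A_k := (∑ V_k|A_k)|⋃ (A_k ∩ B_k)` in the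
conditional power set. -/
def condConcat (P : @Measure Ω mΩ) (A : Partition mΩ P) (S : ℕ → CondRaw Ω E) :
    CondRaw Ω E :=
  (concatSet P A fun k => (S k).1, ⋃ k, A.part k ∩ (S k).2)

/-- Restriction `(V|A)|B := V|(A ∩ B)`. -/
def crestrict (S : CondRaw Ω E) (B : Set Ω) : CondRaw Ω E := (S.1, S.2 ∩ B)

/-- The degenerate conditional subset `X|∅ = {∗}`, the least element of `P(X)`. -/
def cbot (X : Set (Ω → E)) : CondRaw Ω E := (X, (∅ : Set Ω))

/-- The greatest element `X = X|Ω` of `P(X)`. -/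
def ctop (X : Set (Ω → E)) : CondRaw Ω E := (X, (univ : Set Ω))

/-- `a` is a supremum (conditional union) of the family `s` in `(P(X), ⊑)`. -/
def IsSupOf (P : @Measure Ω mΩ) (X : Set (Ω → E)) (s : Set (CondRaw Ω E))
    (a : CondRaw Ω E) : Prop :=
  IsCond P X a ∧ (∀ b ∈ s, cle P b a) ∧
    ∀ c, IsCond P X c → (∀ b ∈ s, cle P b c) → cle P a c

/-- `a` is an infimum (conditional intersection) of the family `s` in `(P(X), ⊑)`. -/
def IsInfOf (P : @Measure Ω mΩ) (X : Set (Ω → E)) (s : Set (CondRaw Ω E))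
    (a : CondRaw Ω E) : Prop :=
  IsCond P X a ∧ (∀ b ∈ s, cle P a b) ∧
    ∀ c, IsCond P X c → (∀ b ∈ s, cle P c b) → cle P c a

open Classical in
/-- The conditional union (supremum) of a family of conditional subsets. -/
def cSup (P : @Measure Ω mΩ) (X : Set (Ω → E)) (s : Set (CondRaw Ω E)) : CondRaw Ω E :=
  if h : ∃ a, IsSupOf P X s a then h.choose else ctop X

open Classical in
/-- The conditional intersection (infimum) of a family of conditional subsets. -/
def cInf (P : @Measure Ω mΩ) (X : Set (Ω → E)) (s : Set (CondRaw Ω E)) : CondRaw Ω E :=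
  if h : ∃ a, IsInfOf P X s a then h.choose else ctop X

/-- Binary conditional union. -/
def cSup₂ (P : @Measure Ω mΩ) (X : Set (Ω → E)) (a b : CondRaw Ω E) : CondRaw Ω E :=
  cSup P X {a, b}

/-- Binary conditional intersection. -/
def cInf₂ (P : @Measure Ω mΩ) (X : Set (Ω → E)) (a b : CondRaw Ω E) : CondRaw Ω E :=
  cInf P X {a, b}

/-- Conditional union of an indexed family. -/
def cSupFam (P : @Measure Ω mΩ) (X : Set (Ω → E)) {ι : Sort*}
    (S : ι → CondRaw Ω E) : CondRaw Ω E :=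
  cSup P X (range S)

/-- Conditional intersection of an indexed family. -/
def cInfFam (P : @Measure Ω mΩ) (X : Set (Ω → E)) {ι : Sort*}
    (S : ι → CondRaw Ω E) : CondRaw Ω E :=
  cInf P X (range S)

/-- Disjointness of conditional subsets: `V|A ⊓ W|B = {∗}`. -/
def cdisjoint (P : @Measure Ω mΩ) (X : Set (Ω → E)) (a b : CondRaw Ω E) : Prop :=
  ceq P (cInf₂ P X a b) (cbot X)

/-- The conditional complement `(V|A)^⊏ := ⊔ {W|B : W|B ⊓ V|A = {∗}}`. -/
def ccompl (P : @Measure Ω mΩ) (X : Set (Ω → E)) (a : CondRaw Ω E) : CondRaw Ω E :=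
  cSup P X {b | IsCond P X b ∧ cdisjoint P X b a}

open Classical in
/-- The largest measurable set (mod null sets) satisfying a property `Φ`,
obtained by an exhaustion argument; junk value `∅` if there is none. -/
def largestSet (P : @Measure Ω mΩ) (Φ : Set Ω → Prop) : Set Ω :=
  if h : ∃ C, MeasurableSet[mΩ] C ∧ Φ C ∧
      ∀ C', MeasurableSet[mΩ] C' → Φ C' → P (C' \ C) = 0
  then h.choose else ∅

open Classical in
/-- The smallest measurable set (mod null sets) satisfying a property `Φ`. -/
def smallestSet (P : @Measure Ω mΩ) (Φ : Set Ω → Prop) : Set Ω :=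
  if h : ∃ C, MeasurableSet[mΩ] C ∧ Φ C ∧
      ∀ C', MeasurableSet[mΩ] C' → Φ C' → P (C \ C') = 0
  then h.choose else univ

/-- Essential infimum `inf_i A_i` of a family of measurable sets in the measure algebra. -/
def essInfFam (P : @Measure Ω mΩ) {ι : Sort*} (A : ι → Set Ω) : Set Ω :=
  largestSet P fun C => ∀ i, P (C \ A i) = 0

/-- Essential supremum `sup_i A_i` of a family of measurable sets in the measure algebra. -/
def essSupFam (P : @Measure Ω mΩ) {ι : Sort*} (A : ι → Set Ω) : Set Ω :=
  smallestSet P fun C => ∀ i, P (A i \ C) = 0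

/-- A stable collection: a nonempty, `ceq`-saturated family of conditional subsets of `X`
closed under countable concatenations. -/
def IsStableColl (P : @Measure Ω mΩ) (X : Set (Ω → E)) (𝒞 : Set (CondRaw Ω E)) : Prop :=
  𝒞.Nonempty ∧ (∀ S ∈ 𝒞, IsCond P X S) ∧
    (∀ S ∈ 𝒞, ∀ T, IsCond P X T → ceq P S T → T ∈ 𝒞) ∧
    ∀ (A : Partition mΩ P) (S : ℕ → CondRaw Ω E), (∀ k, S k ∈ 𝒞) → condConcat P A S ∈ 𝒞

/-- A stable σ-algebra on `X`. -/
def IsStableSigma (P : @Measure Ω mΩ) (X : Set (Ω → E)) (𝒳 : Set (CondRaw Ω E)) : Prop :=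
  IsStableColl P X 𝒳 ∧ ctop X ∈ 𝒳 ∧ (∀ S ∈ 𝒳, ccompl P X S ∈ 𝒳) ∧
    ∀ S : ℕ → CondRaw Ω E, (∀ k, S k ∈ 𝒳) → cSupFam P X S ∈ 𝒳

/-- A stable Dynkin system on `X`. -/
def IsStableDynkin (P : @Measure Ω mΩ) (X : Set (Ω → E)) (𝒟 : Set (CondRaw Ω E)) : Prop :=
  IsStableColl P X 𝒟 ∧ ctop X ∈ 𝒟 ∧ (∀ S ∈ 𝒟, ccompl P X S ∈ 𝒟) ∧
    ∀ S : ℕ → CondRaw Ω E, (∀ k, S k ∈ 𝒟) →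
      (∀ i j, i ≠ j → cdisjoint P X (S i) (S j)) → cSupFam P X S ∈ 𝒟

/-- A stable ring on `X`. -/
def IsStableRing (P : @Measure Ω mΩ) (X : Set (Ω → E)) (𝒳 : Set (CondRaw Ω E)) : Prop :=
  IsStableColl P X 𝒳 ∧
    ∀ S ∈ 𝒳, ∀ T ∈ 𝒳, cInf₂ P X S (ccompl P X T) ∈ 𝒳 ∧ cSup₂ P X S T ∈ 𝒳

/-- The stable σ-algebra generated by a collection `ℰ`. -/
def sigmaGen (P : @Measure Ω mΩ) (X : Set (Ω → E)) (ℰ : Set (CondRaw Ω E)) :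
    Set (CondRaw Ω E) :=
  ⋂₀ {𝒳 | IsStableSigma P X 𝒳 ∧ ℰ ⊆ 𝒳}

/-- The stable Dynkin system generated by a collection `ℰ`. -/
def dynkinGen (P : @Measure Ω mΩ) (X : Set (Ω → E)) (ℰ : Set (CondRaw Ω E)) :
    Set (CondRaw Ω E) :=
  ⋂₀ {𝒟 | IsStableDynkin P X 𝒟 ∧ ℰ ⊆ 𝒟}

/-! ### Stable set functions and stable measures -/

/-- A stable set function `μ : 𝒞 → L̄⁰₊` (represented by measurable representatives,
well defined modulo identification, and commuting with countable concatenations). -/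
def IsStableSetFun (P : @Measure Ω mΩ) (𝒞 : Set (CondRaw Ω E))
    (μ : CondRaw Ω E → Ω → ℝ≥0∞) : Prop :=
  (∀ S ∈ 𝒞, Measurable[mΩ] (μ S)) ∧
    (∀ S ∈ 𝒞, ∀ T ∈ 𝒞, ceq P S T → μ S =ᵐ[P] μ T) ∧
    ∀ (A : Partition mΩ P) (S : ℕ → CondRaw Ω E), (∀ k, S k ∈ 𝒞) →
      μ (condConcat P A S) =ᵐ[P] A.concat fun k => μ (S k)

/-- Property (M1): `μ(V|A) = μ(V|A)|A + 0|Aᶜ`. -/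
def M1 (P : @Measure Ω mΩ) (𝒞 : Set (CondRaw Ω E)) (μ : CondRaw Ω E → Ω → ℝ≥0∞) : Prop :=
  ∀ S ∈ 𝒞, μ S =ᵐ[P] S.2.indicator (μ S)

/-- Property (M2): countable additivity on pairwise disjoint sequences whose
conditional union belongs to the domain. -/
def M2 (P : @Measure Ω mΩ) (X : Set (Ω → E)) (𝒳 : Set (CondRaw Ω E))
    (μ : CondRaw Ω E → Ω → ℝ≥0∞) : Prop :=
  ∀ S : ℕ → CondRaw Ω E, (∀ k, S k ∈ 𝒳) →
    (∀ i j, i ≠ j → cdisjoint P X (S i) (S j)) → cSupFam P X S ∈ 𝒳 →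
    μ (cSupFam P X S) =ᵐ[P] fun ω => ∑' k, μ (S k) ω

/-- Finite additivity: (M2) for finite pairwise disjoint families. -/
def FinAdd (P : @Measure Ω mΩ) (X : Set (Ω → E)) (𝒳 : Set (CondRaw Ω E))
    (μ : CondRaw Ω E → Ω → ℝ≥0∞) : Prop :=
  ∀ (n : ℕ) (S : Fin n → CondRaw Ω E), (∀ k, S k ∈ 𝒳) →
    (∀ i j, i ≠ j → cdisjoint P X (S i) (S j)) → cSupFam P X S ∈ 𝒳 →
    μ (cSupFam P X S) =ᵐ[P] fun ω => ∑ k, μ (S k) ω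

/-- A stable measure (or stable pre-measure, when the domain is merely a stable
ring): a stable set function satisfying (M1) and (M2). -/
def IsStableMeasureOn (P : @Measure Ω mΩ) (X : Set (Ω → E)) (𝒳 : Set (CondRaw Ω E))
    (μ : CondRaw Ω E → Ω → ℝ≥0∞) : Prop :=
  IsStableSetFun P 𝒳 μ ∧ M1 P 𝒳 μ ∧ M2 P X 𝒳 μ

/-- A finite stable measure. -/
def IsFiniteStableMeasureOn (P : @Measure Ω mΩ) (X : Set (Ω → E))
    (𝒳 : Set (CondRaw Ω E)) (μ : CondRaw Ω E → Ω → ℝ≥0∞) : Prop :=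
  IsStableMeasureOn P X 𝒳 μ ∧ ∀ᵐ ω ∂P, μ (ctop X) ω < ∞

/-- A stable probability measure. -/
def IsStableProbOn (P : @Measure Ω mΩ) (X : Set (Ω → E)) (𝒳 : Set (CondRaw Ω E))
    (μ : CondRaw Ω E → Ω → ℝ≥0∞) : Prop :=
  IsStableMeasureOn P X 𝒳 μ ∧ μ (ctop X) =ᵐ[P] fun _ => (1 : ℝ≥0∞)

/-- A stable outer measure on the conditional power set of `X`. -/
def IsStableOuter (P : @Measure Ω mΩ) (X : Set (Ω → E))
    (μ : CondRaw Ω E → Ω → ℝ≥0∞) : Prop :=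
  (∀ S, IsCond P X S → Measurable[mΩ] (μ S)) ∧
    (∀ S T, IsCond P X S → IsCond P X T → ceq P S T → μ S =ᵐ[P] μ T) ∧
    (∀ (A : Partition mΩ P) (S : ℕ → CondRaw Ω E), (∀ k, IsCond P X (S k)) →
      μ (condConcat P A S) =ᵐ[P] A.concat fun k => μ (S k)) ∧
    (∀ S, IsCond P X S → ∀ B, MeasurableSet[mΩ] B →
      μ (crestrict S B) =ᵐ[P] B.indicator (μ S)) ∧
    (∀ S T, IsCond P X S → IsCond P X T → cle P S T → ∀ᵐ ω ∂P, μ S ω ≤ μ T ω) ∧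
    ∀ S : ℕ → CondRaw Ω E, (∀ k, IsCond P X (S k)) →
      ∀ᵐ ω ∂P, μ (cSupFam P X S) ω ≤ ∑' k, μ (S k) ω

/-- Stable Carathéodory measurability with respect to a stable outer measure. -/
def CaraMeasurable (P : @Measure Ω mΩ) (X : Set (Ω → E))
    (μ : CondRaw Ω E → Ω → ℝ≥0∞) (S : CondRaw Ω E) : Prop :=
  ∀ T, IsCond P X T →
    (fun ω => μ (cInf₂ P X T S) ω + μ (cInf₂ P X T (ccompl P X S)) ω) =ᵐ[P] μ T

/-! ### Stable functions, the stable Borel σ-algebra on `L⁰`, and the integral -/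

/-- The stable set `L⁰_m(E)` of all (classes of) measurable functions `Ω → E`. -/
def l0m (P : @Measure Ω mΩ) (E : Type*) [MeasurableSpace E] : Set (Ω → E) :=
  {x | AEMeasurable x P}

/-- A stable function between stable sets of functions. -/
def StableFun (P : @Measure Ω mΩ) (X : Set (Ω → E)) (Y : Set (Ω → F'))
    (f : (Ω → E) → Ω → F') : Prop :=
  (∀ x ∈ X, f x ∈ Y) ∧ (∀ x ∈ X, ∀ y ∈ X, x =ᵐ[P] y → f x =ᵐ[P] f y) ∧
    ∀ (A : Partition mΩ P) (x : ℕ → Ω → E), (∀ k, x k ∈ X) →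
      f (A.concat x) =ᵐ[P] A.concat fun k => f (x k)

/-- The conditional preimage `f⁻¹(W|A)`. -/
def cPreimage (P : @Measure Ω mΩ) (X : Set (Ω → E)) (f : (Ω → E) → Ω → F')
    (W : CondRaw Ω F') : CondRaw Ω E :=
  ({x ∈ X | memOn P (largestSet P fun C => P (C \ W.2) = 0 ∧ ∃ x ∈ X, memOn P C (f x) W.1)
      (f x) W.1},
    largestSet P fun C => P (C \ W.2) = 0 ∧ ∃ x ∈ X, memOn P C (f x) W.1)

/-- The stable Borel σ-algebra `B(L⁰)` on `L⁰`, generated by the stable open balls. -/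
def borelL0 (P : @Measure Ω mΩ) : Set (CondRaw Ω ℝ) :=
  sigmaGen P (l0m P ℝ)
    {S | ∃ r ε : Ω → ℝ, AEMeasurable r P ∧ AEMeasurable ε P ∧ (∀ᵐ ω ∂P, 0 < ε ω) ∧
      ceq P S ({s | AEMeasurable s P ∧ ∀ᵐ ω ∂P, |s ω - r ω| < ε ω}, univ)}

/-- A stably measurable function `f : X → L⁰` with respect to a stable σ-algebra `𝒳`. -/
def StablyMeasurable (P : @Measure Ω mΩ) (X : Set (Ω → E)) (𝒳 : Set (CondRaw Ω E))
    (f : (Ω → E) → Ω → ℝ) : Prop :=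
  StableFun P X (l0m P ℝ) f ∧ ∀ W ∈ borelL0 P, cPreimage P X f W ∈ 𝒳

/-- The base set `A_x` of the stable indicator function of `S = V|A` at `x`. -/
def indBase (P : @Measure Ω mΩ) (S : CondRaw Ω E) (x : Ω → E) : Set Ω :=
  largestSet P fun C => P (C \ S.2) = 0 ∧ memOn P C x S.1

/-- The stable indicator function `1_{V|A} : X → L⁰`. -/
def cIndicator (P : @Measure Ω mΩ) (S : CondRaw Ω E) (x : Ω → E) : Ω → ℝ :=
  (indBase P S x).indicator fun _ => (1 : ℝ)

/-- Data of a stable elementary function: coefficients and conditional sets. -/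
def ElemRep (Ω E : Type*) := Σ n : ℕ, (Fin n → Ω → ℝ) × (Fin n → CondRaw Ω E)

/-- The function `∑_{k ≤ n} r_k 1_{V_k|A_k}` represented by `ρ`. -/
def repFun (P : @Measure Ω mΩ) (ρ : ElemRep Ω E) : (Ω → E) → Ω → ℝ :=
  fun x ω => ∑ k, ρ.2.1 k ω * cIndicator P (ρ.2.2 k) x ω

/-- The representation `ρ` is admissible: nonnegative `L⁰`-coefficients and a finite
pairwise disjoint family in `𝒳` whose conditional union is `X`. -/
def GoodRep (P : @Measure Ω mΩ) (X : Set (Ω → E)) (𝒳 : Set (CondRaw Ω E))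
    (ρ : ElemRep Ω E) : Prop :=
  (∀ k, AEMeasurable (ρ.2.1 k) P) ∧ (∀ k, ∀ᵐ ω ∂P, 0 ≤ ρ.2.1 k ω) ∧
    (∀ k, ρ.2.2 k ∈ 𝒳) ∧ (∀ i j, i ≠ j → cdisjoint P X (ρ.2.2 i) (ρ.2.2 j)) ∧
    ceq P (cSupFam P X ρ.2.2) (ctop X)

/-- A stable elementary function. -/
def IsElementary (P : @Measure Ω mΩ) (X : Set (Ω → E)) (𝒳 : Set (CondRaw Ω E))
    (f : (Ω → E) → Ω → ℝ) : Prop :=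
  ∃ ρ : ElemRep Ω E, GoodRep P X 𝒳 ρ ∧ ∀ x ∈ X, f x =ᵐ[P] repFun P ρ x

/-- The stable Lebesgue integral `∑_k r_k μ(V_k|A_k)` of the elementary representation. -/
def repInt (μ : CondRaw Ω E → Ω → ℝ≥0∞) (ρ : ElemRep Ω E) : Ω → ℝ≥0∞ :=
  fun ω => ∑ k, ENNReal.ofReal (ρ.2.1 k ω) * μ (ρ.2.2 k) ω

/-- The stable Lebesgue integral of a nonnegative function, as the supremum of the
integrals of the dominated stable elementary functions. -/
def cIntNN (P : @Measure Ω mΩ) (X : Set (Ω → E)) (𝒳 : Set (CondRaw Ω E))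
    (μ : CondRaw Ω E → Ω → ℝ≥0∞) (f : (Ω → E) → Ω → ℝ) : Ω → ℝ≥0∞ :=
  fun ω =>
    ⨆ ρ : {ρ : ElemRep Ω E // GoodRep P X 𝒳 ρ ∧
        ∀ x ∈ X, ∀ᵐ ω' ∂P, repFun P ρ x ω' ≤ f x ω'},
      repInt μ ρ.1 ω

/-- The positive part `f⁺` of an `L⁰`-valued function. -/
def fplus (f : (Ω → E) → Ω → ℝ) : (Ω → E) → Ω → ℝ := fun x ω => max (f x ω) 0

/-- The negative part `f⁻` of an `L⁰`-valued function. -/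
def fminus (f : (Ω → E) → Ω → ℝ) : (Ω → E) → Ω → ℝ := fun x ω => max (-(f x ω)) 0

/-- Stable integrability of `f : X → L⁰`. -/
def CIntegrable (P : @Measure Ω mΩ) (X : Set (Ω → E)) (𝒳 : Set (CondRaw Ω E))
    (μ : CondRaw Ω E → Ω → ℝ≥0∞) (f : (Ω → E) → Ω → ℝ) : Prop :=
  StablyMeasurable P X 𝒳 f ∧ (∀ᵐ ω ∂P, cIntNN P X 𝒳 μ (fplus f) ω < ∞) ∧
    ∀ᵐ ω ∂P, cIntNN P X 𝒳 μ (fminus f) ω < ∞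

/-- The stable Lebesgue integral `∫_X f dμ := ∫ f⁺ dμ − ∫ f⁻ dμ`. -/
def cInt (P : @Measure Ω mΩ) (X : Set (Ω → E)) (𝒳 : Set (CondRaw Ω E))
    (μ : CondRaw Ω E → Ω → ℝ≥0∞) (f : (Ω → E) → Ω → ℝ) : Ω → ℝ :=
  fun ω => (cIntNN P X 𝒳 μ (fplus f) ω).toReal - (cIntNN P X 𝒳 μ (fminus f) ω).toReal

/-! ### Products and sections -/

/-- The pairing `ω ↦ (x ω, y ω)`. -/
def pairFn (x : Ω → E) (y : Ω → F') : Ω → E × F' := fun ω => (x ω, y ω)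

/-- The Cartesian product `X × Y` of two stable sets, as a stable set of functions
`Ω → E × F'`. -/
def prodSet (P : @Measure Ω mΩ) (X : Set (Ω → E)) (Y : Set (Ω → F')) :
    Set (Ω → E × F') :=
  {z | ∃ x ∈ X, ∃ y ∈ Y, z =ᵐ[P] pairFn x y}

/-- The conditional rectangle `V|A × W|B := (V × W)|A ∩ B`. -/
def crect (P : @Measure Ω mΩ) (S : CondRaw Ω E) (T : CondRaw Ω F') :
    CondRaw Ω (E × F') :=
  (prodSet P S.1 T.1, S.2 ∩ T.2)

/-- The stable product σ-algebra `𝒳 ⊗ 𝒴`, generated by the conditional rectangles. -/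
def prodSigma (P : @Measure Ω mΩ) (X : Set (Ω → E)) (Y : Set (Ω → F'))
    (𝒳 : Set (CondRaw Ω E)) (𝒴 : Set (CondRaw Ω F')) : Set (CondRaw Ω (E × F')) :=
  sigmaGen P (prodSet P X Y) {R | ∃ S ∈ 𝒳, ∃ T ∈ 𝒴, ceq P R (crect P S T)}

/-- The conditional `x`-section `(Z|C)_x` of a conditional subset of `X × Y`. -/
def xsection (P : @Measure Ω mΩ) (Y : Set (Ω → F')) (Z : CondRaw Ω (E × F'))
    (x : Ω → E) : CondRaw Ω F' :=
  ({y ∈ Y | memOn P (largestSet P fun D => P (D \ Z.2) = 0 ∧ ∃ y ∈ Y, memOn P D (pairFn x y) Z.1)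
      (pairFn x y) Z.1},
    largestSet P fun D => P (D \ Z.2) = 0 ∧ ∃ y ∈ Y, memOn P D (pairFn x y) Z.1)

/-- The conditional `y`-section `(Z|C)_y` of a conditional subset of `X × Y`. -/
def ysection (P : @Measure Ω mΩ) (X : Set (Ω → E)) (Z : CondRaw Ω (E × F'))
    (y : Ω → F') : CondRaw Ω E :=
  ({x ∈ X | memOn P (largestSet P fun D => P (D \ Z.2) = 0 ∧ ∃ x ∈ X, memOn P D (pairFn x y) Z.1)
      (pairFn x y) Z.1},
    largestSet P fun D => P (D \ Z.2) = 0 ∧ ∃ x ∈ X, memOn P D (pairFn x y) Z.1)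

/-! ### Conditional subsets of `L⁰_m(E)` associated to measurable sets -/

/-- `L⁰_m(F) = {x ∈ L⁰_m(E) : x ∈ F a.s.}` for a measurable `F ⊆ E`. -/
def l0mF (P : @Measure Ω mΩ) {E : Type*} [MeasurableSpace E] (F : Set E) : Set (Ω → E) :=
  {x | AEMeasurable x P ∧ ∀ᵐ ω ∂P, x ω ∈ F}

/-- `∑ L⁰_m(F_k)|A_k = {x ∈ L⁰_m(E) : x ∈ F_k a.s. on A_k for all k}`. -/
def l0mConcat (P : @Measure Ω mΩ) {E : Type*} [MeasurableSpace E]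
    (A : Partition mΩ P) (F : ℕ → Set E) : Set (Ω → E) :=
  {x | AEMeasurable x P ∧ ∀ k, ∀ᵐ ω ∂P, ω ∈ A.part k → x ω ∈ F k}

/-- The stable ring `ℛ` on `L⁰_m(E)` generated by a measurable structure on `E`:
all conditional subsets of the form `(∑ L⁰_m(F_k)|A_k)|B`. -/
def ringR (P : @Measure Ω mΩ) (E : Type*) [MeasurableSpace E] : Set (CondRaw Ω E) :=
  {S | ∃ (F : ℕ → Set E) (A : Partition mΩ P) (B : Set Ω),
    (∀ k, MeasurableSet (F k)) ∧ MeasurableSet[mΩ] B ∧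
      ceq P S (l0mConcat P A F, B)}

end CondMT

namespace CondMT

/-- A conditional subset of the stable set `X` (a representative together with the
proof that it is one). -/
def CondSub {Ω E : Type*} {mΩ : MeasurableSpace Ω} (P : @Measure Ω mΩ)
    (X : Set (Ω → E)) :=
  {S : CondRaw Ω E // IsCond P X S}

/-- The conditional power set `P(X)`: conditional subsets of `X` modulo the
almost-sure identification `ceq`. -/
def CondPow {Ω E : Type*} {mΩ : MeasurableSpace Ω} (P : @Measure Ω mΩ)
    (X : Set (Ω → E)) :=
  Quot (fun S T : CondSub P X => ceq P S.1 T.1)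

/-- The conditional inclusion relation `⊑` on the conditional power set. -/
def qle {Ω E : Type*} {mΩ : MeasurableSpace Ω} (P : @Measure Ω mΩ)
    (X : Set (Ω → E)) (a b : CondPow P X) : Prop :=
  ∀ S T : CondSub P X, Quot.mk _ S = a → Quot.mk _ T = b → cle P S.1 T.1

/-! ### Helper lemmas: concatenations, exhaustion, and the forcing relation -/

section Helpers

variable {Ω E : Type*} {mΩ : MeasurableSpace Ω} {P : @Measure Ω mΩ}

/-- Almost surely, the concatenation agrees with `x k` on the `k`-th part. -/
lemma concat_ae (A : Partition mΩ P) (x : ℕ → Ω → E) :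
    ∀ᵐ ω ∂P, ∀ k, ω ∈ A.part k → A.concat x ω = x k ω := by
  have h : ∀ᵐ ω ∂P, ∀ i j, i ≠ j → ω ∉ A.part i ∩ A.part j := by
    rw [ae_all_iff]; intro i
    rw [ae_all_iff]; intro j
    by_cases hij : i = j
    · exact Eventually.of_forall fun ω h => absurd hij h
    · filter_upwards [measure_eq_zero_iff_ae_notMem.1 (A.disj i j hij)] with ω hω _ using hω
  filter_upwards [h] with ω hω k hk
  have hex : ∃ k, ω ∈ A.part k := ⟨k, hk⟩
  classical
  have hf : Nat.find hex = k := by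
    by_contra hne
    exact hω _ _ hne ⟨Nat.find_spec hex, hk⟩
  unfold Partition.concat
  rw [dif_pos hex]
  congr 1

lemma part_cover (A : Partition mΩ P) : ∀ᵐ ω ∂P, ∃ k, ω ∈ A.part k := by
  filter_upwards [measure_eq_zero_iff_ae_notMem.1 A.cover] with ω hω
  simpa using hω

/-- Gluing a sequence along the disjointed sequence of a sequence of measurable sets. -/
lemma glue {X : Set (Ω → E)} (hX : Stable P X) (C : ℕ → Set Ω)
    (hC : ∀ k, MeasurableSet (C k)) (x : ℕ → Ω → E) (hx : ∀ k, x k ∈ X) :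
    ∃ y ∈ X, ∀ᵐ ω ∂P, ∀ k, ω ∈ disjointed C k → y ω = x k ω := by
  let A : Partition mΩ P :=
    { part := fun k => Nat.casesOn k (⋃ k, C k)ᶜ (fun n => disjointed C n)
      meas := by
        rintro (_ | n)
        · exact (MeasurableSet.iUnion hC).compl
        · exact MeasurableSet.disjointed hC n
      disj := by
        have key : ∀ n, (⋃ k, C k)ᶜ ∩ disjointed C n = ∅ := by
          intro n
          ext ω
          simp only [mem_inter_iff, mem_compl_iff, mem_empty_iff_false, iff_false, not_and]
          intro h1 h2
          exact h1 (mem_iUnion.2 ⟨n, disjointed_subset C n h2⟩)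
        rintro (_ | i) (_ | j) hij
        · exact absurd rfl hij
        · exact (congrArg P (key j)).trans measure_empty
        · exact (congrArg P ((inter_comm _ _).trans (key i))).trans measure_empty
        · have : Disjoint (disjointed C i) (disjointed C j) :=
            disjoint_disjointed C (by simpa using hij)
          simp [this.inter_eq]
      cover := by
        have : (⋃ k, (fun k => Nat.casesOn k (⋃ k, C k)ᶜ (fun n => disjointed C n) :
            ℕ → Set Ω) k) = univ := by
          rw [eq_univ_iff_forall]
          intro ω
          by_cases h : ω ∈ ⋃ k, C k
          · rw [← iUnion_disjointed] at h
            obtain ⟨k, hk⟩ := mem_iUnion.1 h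
            exact mem_iUnion.2 ⟨k + 1, hk⟩
          · exact mem_iUnion.2 ⟨0, h⟩
        rw [this]; simp }
  refine ⟨A.concat (fun k => x (k - 1)), hX.2.2 A _ (fun k => hx _), ?_⟩
  filter_upwards [concat_ae A (fun k => x (k - 1))] with ω hω k hk
  exact hω (k + 1) hk

/-- Two-piece gluing. -/
lemma glue₂ {X : Set (Ω → E)} (hX : Stable P X) (C : Set Ω)
    (hC : MeasurableSet C) {x x' : Ω → E} (hx : x ∈ X) (hx' : x' ∈ X) :
    ∃ y ∈ X, ∀ᵐ ω ∂P, (ω ∈ C → y ω = x ω) ∧ (ω ∉ C → y ω = x' ω) := by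
  obtain ⟨y, hy, h⟩ := glue hX (fun k => Nat.casesOn k C (fun _ => univ))
    (by rintro (_ | n); exacts [hC, MeasurableSet.univ])
    (fun k => Nat.casesOn k x (fun _ => x')) (by rintro (_ | n); exacts [hx, hx'])
  refine ⟨y, hy, ?_⟩
  filter_upwards [h] with ω hω
  constructor
  · intro hc
    exact hω 0 (by rw [disjointed_zero]; exact hc)
  · intro hc
    have : ω ∈ ⋃ k, disjointed (fun k => Nat.casesOn k C (fun _ => univ) : ℕ → Set Ω) k := by
      rw [iUnion_disjointed]
      exact mem_iUnion.2 ⟨1, trivial⟩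
    obtain ⟨k, hk⟩ := mem_iUnion.1 this
    rcases k with _ | k
    · rw [disjointed_zero] at hk; exact absurd hk hc
    · exact hω (k + 1) hk

/-- Exhaustion. -/
lemma exhaust [IsProbabilityMeasure P] (𝒜 : Set (Set Ω)) (hne : 𝒜.Nonempty)
    (hm : ∀ C ∈ 𝒜, MeasurableSet C) :
    ∃ C : ℕ → Set Ω, (∀ k, C k ∈ 𝒜) ∧ ∀ B ∈ 𝒜, ∀ᵐ ω ∂P, ω ∈ B → ω ∈ ⋃ k, C k := by
  let T : Set ℝ≥0∞ := {r | ∃ C : ℕ → Set Ω, (∀ k, C k ∈ 𝒜) ∧ P (⋃ k, C k) = r}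
  obtain ⟨C₀, hC₀⟩ := hne
  have hT : T.Nonempty := ⟨_, fun _ => C₀, fun _ => hC₀, rfl⟩
  obtain ⟨u, -, hu, huT⟩ := exists_seq_tendsto_sSup hT (OrderTop.bddAbove T)
  choose D hD hDu using huT
  let C : ℕ → Set Ω := fun n => D n.unpair.1 n.unpair.2
  have hC : ∀ k, C k ∈ 𝒜 := fun k => hD _ _
  have hge : sSup T ≤ P (⋃ k, C k) := by
    refine le_of_tendsto' hu fun n => ?_
    rw [← hDu n]
    refine measure_mono (iUnion_subset fun k => ?_)
    intro ω hω
    refine mem_iUnion.2 ⟨Nat.pair n k, ?_⟩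
    simpa [C] using hω
  refine ⟨C, hC, fun B hB => ?_⟩
  have hle : P (B ∪ ⋃ k, C k) ≤ sSup T := by
    refine le_sSup ⟨fun k => Nat.casesOn k B C, ?_, ?_⟩
    · rintro (_ | k); exacts [hB, hC k]
    · congr 1
      ext ω
      simp only [mem_iUnion, mem_union]
      constructor
      · rintro ⟨_ | k, hk⟩; exacts [Or.inl hk, Or.inr ⟨k, hk⟩]
      · rintro (h | ⟨k, hk⟩); exacts [⟨0, h⟩, ⟨k + 1, hk⟩]
  have hU : MeasurableSet (⋃ k, C k) := MeasurableSet.iUnion fun k => hm _ (hC k)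
  have h0 : P (B \ ⋃ k, C k) = 0 := by
    rw [← union_sdiff_right, measure_sdiff subset_union_right hU.nullMeasurableSet
      (measure_ne_top _ _)]
    exact tsub_eq_zero_of_le (hle.trans hge)
  exact ae_le_set.2 h0

/-- `C` forces `x` to belong to `S`. -/
def forces (P : @Measure Ω mΩ) (S : CondRaw Ω E) (x : Ω → E) (C : Set Ω) : Prop :=
  MeasurableSet C ∧ (∀ᵐ ω ∂P, ω ∈ C → ω ∈ S.2) ∧ ∃ y ∈ S.1, ∀ᵐ ω ∂P, ω ∈ C → x ω = y ω

/-- Forcing predicates: those which come from conditional subsets of `X`. -/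
structure Good (P : @Measure Ω mΩ) (X : Set (Ω → E)) (Φ : (Ω → E) → Set Ω → Prop) : Prop where
  meas : ∀ x ∈ X, ∀ C, Φ x C → MeasurableSet C
  empty : ∀ x ∈ X, Φ x ∅
  mono : ∀ x ∈ X, ∀ C D, Φ x C → MeasurableSet D → (∀ᵐ ω ∂P, ω ∈ D → ω ∈ C) → Φ x D
  union : ∀ x ∈ X, ∀ C : ℕ → Set Ω, (∀ k, Φ x (C k)) → Φ x (⋃ k, C k)
  loc : ∀ x ∈ X, ∀ y ∈ X, ∀ C, (∀ᵐ ω ∂P, ω ∈ C → x ω = y ω) → Φ x C → Φ y C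

lemma Good.union₂ {X : Set (Ω → E)} {Φ : (Ω → E) → Set Ω → Prop} (h : Good P X Φ)
    {x : Ω → E} (hx : x ∈ X) {C D : Set Ω} (hC : Φ x C) (hD : Φ x D) : Φ x (C ∪ D) := by
  have := h.union x hx (fun k => Nat.casesOn k C (fun _ => D))
    (by rintro (_ | k); exacts [hC, hD])
  convert this using 1
  ext ω
  simp only [mem_iUnion, mem_union]
  constructor
  · rintro (h | h); exacts [⟨0, h⟩, ⟨1, h⟩]
  · rintro ⟨_ | k, hk⟩; exacts [Or.inl hk, Or.inr hk]

lemma good_forces {X : Set (Ω → E)} {S : CondRaw Ω E} (hS : IsCond P X S) :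
    Good P X (forces P S) where
  meas := fun x _ C h => h.1
  empty := fun x _ => by
    obtain ⟨v, hv⟩ := hS.1.1
    exact ⟨MeasurableSet.empty, by simp, v, hv, by simp⟩
  mono := fun x _ C D h hD hDC => by
    obtain ⟨_, h1, y, hy, h2⟩ := h
    refine ⟨hD, ?_, y, hy, ?_⟩
    · filter_upwards [h1, hDC] with ω a b c using a (b c)
    · filter_upwards [h2, hDC] with ω a b c using a (b c)
  union := fun x _ C h => by
    choose hm h1 y hy h2 using h
    obtain ⟨z, hz, hzy⟩ := glue hS.1 C hm y hy
    refine ⟨MeasurableSet.iUnion hm, ?_, z, hz, ?_⟩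
    · filter_upwards [ae_all_iff.2 h1] with ω a b
      obtain ⟨k, hk⟩ := mem_iUnion.1 b
      exact a k hk
    · filter_upwards [ae_all_iff.2 h2, hzy] with ω a b c
      rw [← iUnion_disjointed] at c
      obtain ⟨k, hk⟩ := mem_iUnion.1 c
      rw [b k hk, a k (disjointed_subset C k hk)]
  loc := fun x _ y _ C hxy h => by
    obtain ⟨hm, h1, v, hv, h2⟩ := h
    refine ⟨hm, h1, v, hv, ?_⟩
    filter_upwards [h2, hxy] with ω a b c
    rw [← b c, a c]

lemma cle.forces {S T : CondRaw Ω E} (h : cle P S T) {x : Ω → E} {C : Set Ω}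
    (hx : forces P S x C) : forces P T x C := by
  obtain ⟨hm, h1, v, hv, h2⟩ := hx
  obtain ⟨w, hw, h3⟩ := h.2 v hv
  have h4 : ∀ᵐ ω ∂P, ω ∈ S.2 → ω ∈ T.2 := ae_le_set.2 h.1
  refine ⟨hm, ?_, w, hw, ?_⟩
  · filter_upwards [h1, h4] with ω a b c using b (a c)
  · filter_upwards [h1, h2, h3] with ω a b d c
    rw [b c, d (a c)]

lemma cle_of_forces {X : Set (Ω → E)} {S T : CondRaw Ω E} (hS : IsCond P X S)
    (h : ∀ x ∈ X, ∀ C, CondMT.forces P S x C → CondMT.forces P T x C) : cle P S T := by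
  have key : ∀ x ∈ S.1, CondMT.forces P T x S.2 := fun x hx =>
    h x (hS.2.1 hx) _ ⟨hS.2.2, by simp, x, hx, by simp⟩
  obtain ⟨v, hv⟩ := hS.1.1
  exact ⟨ae_le_set.1 (key v hv).2.1, fun x hx => (key x hx).2.2⟩

/-- Every good predicate is the forcing predicate of a conditional subset. -/
lemma realize [IsProbabilityMeasure P] {X : Set (Ω → E)} (hX : Stable P X)
    {Φ : (Ω → E) → Set Ω → Prop} (h : Good P X Φ) :
    ∃ S, IsCond P X S ∧ ∀ x ∈ X, ∀ C, forces P S x C ↔ Φ x C := by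
  obtain ⟨x₀, hx₀⟩ := hX.1
  obtain ⟨C, hC, hmax⟩ := exhaust (P := P) {C | ∃ x ∈ X, Φ x C} ⟨∅, x₀, hx₀, h.empty x₀ hx₀⟩
    (by rintro C ⟨x, hx, hxC⟩; exact h.meas x hx C hxC)
  choose x hx hxC using hC
  have hm : ∀ k, MeasurableSet (C k) := fun k => h.meas _ (hx k) _ (hxC k)
  have hmA : MeasurableSet (⋃ k, C k) := MeasurableSet.iUnion hm
  obtain ⟨z, hz, hzx⟩ := glue hX C hm x hx
  have hzA : Φ z (⋃ k, C k) := by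
    rw [← iUnion_disjointed]
    refine h.union z hz _ fun k => ?_
    refine h.loc (x k) (hx k) z hz _ ?_ (h.mono (x k) (hx k) (C k) _ (hxC k)
      (MeasurableSet.disjointed hm k)
      (Eventually.of_forall fun ω hω => disjointed_subset C k hω))
    filter_upwards [hzx] with ω a b using (a k b).symm
  generalize (⋃ k, C k) = A at *
  refine ⟨({x | x ∈ X ∧ Φ x A}, A), ⟨⟨⟨z, hz, hzA⟩, ?_, ?_⟩, fun x hx => hx.1, hmA⟩, ?_⟩
  · rintro x ⟨hx, hxA⟩ y hxy
    have hy := hX.2.1 x hx y hxy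
    refine ⟨hy, h.loc x hx y hy A ?_ hxA⟩
    filter_upwards [hxy] with ω a _ using a
  · intro B y hy
    have hyX : B.concat y ∈ X := hX.2.2 B y fun k => (hy k).1
    refine ⟨hyX, ?_⟩
    refine h.mono _ hyX (⋃ k, A ∩ B.part k) A (h.union _ hyX _ fun k => ?_) hmA ?_
    · have hk := hy k
      refine h.loc (y k) hk.1 _ hyX _ ?_ (h.mono (y k) hk.1 A _ hk.2 (hmA.inter (B.meas k))
        (Eventually.of_forall fun ω hω => hω.1))
      filter_upwards [concat_ae B y] with ω a b using (a k b.2).symm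
    · filter_upwards [part_cover B] with ω ⟨k, hk⟩ b
      exact mem_iUnion.2 ⟨k, b, hk⟩
  · intro x hx C
    constructor
    · rintro ⟨hCm, h1, y, ⟨hy, hyA⟩, h2⟩
      refine h.loc y hy x hx C ?_ (h.mono y hy A C hyA hCm h1)
      filter_upwards [h2] with ω a b using (a b).symm
    · intro hxC
      have hCm := h.meas x hx C hxC
      obtain ⟨y, hy, hyx⟩ := glue₂ hX C hCm hx hz
      refine ⟨hCm, hmax C ⟨x, hx, hxC⟩, y, ⟨hy, ?_⟩, ?_⟩
      · have h1 : Φ y C := by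
          refine h.loc x hx y hy C ?_ hxC
          filter_upwards [hyx] with ω a b using (a.1 b).symm
        have h2 : Φ y (A \ C) := by
          refine h.loc z hz y hy _ ?_ (h.mono z hz A _ hzA (hmA.diff hCm)
            (Eventually.of_forall fun ω hω => hω.1))
          filter_upwards [hyx] with ω a b using (a.2 b.2).symm
        refine h.mono y hy _ A (h.union₂ hy h1 h2) hmA (Eventually.of_forall fun ω hω => ?_)
        by_cases hc : ω ∈ C
        · exact Or.inl hc
        · exact Or.inr ⟨hω, hc⟩
      · filter_upwards [hyx] with ω a b using (a.1 b).symm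

/-- The forcing relation on the conditional power set. -/
def qf {X : Set (Ω → E)} (q : CondPow P X) : (Ω → E) → Set Ω → Prop :=
  Quot.lift (fun S : CondSub P X => CondMT.forces P S.1)
    (fun _ _ h => funext fun _ => funext fun _ => propext ⟨h.1.forces, h.2.forces⟩) q

lemma good_qf {X : Set (Ω → E)} (q : CondPow P X) : Good P X (qf q) := by
  induction q using Quot.ind with
  | mk S => exact good_forces S.2

lemma realize_q [IsProbabilityMeasure P] {X : Set (Ω → E)} (hX : Stable P X)
    {Φ : (Ω → E) → Set Ω → Prop} (h : Good P X Φ) :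
    ∃ q : CondPow P X, ∀ x ∈ X, ∀ C, qf q x C ↔ Φ x C := by
  obtain ⟨S, hS, hSΦ⟩ := realize hX h
  exact ⟨Quot.mk _ ⟨S, hS⟩, hSΦ⟩

lemma good_inf {X : Set (Ω → E)} (s : Set (CondPow P X)) :
    Good P X (fun x C => MeasurableSet C ∧ ∀ q ∈ s, qf q x C) where
  meas := fun x _ C h => h.1
  empty := fun x hx => ⟨MeasurableSet.empty, fun q _ => (good_qf q).empty x hx⟩
  mono := fun x hx C D h hD hDC => ⟨hD, fun q hq => (good_qf q).mono x hx C D (h.2 q hq) hD hDC⟩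
  union := fun x hx C h => ⟨MeasurableSet.iUnion fun k => (h k).1,
    fun q hq => (good_qf q).union x hx C fun k => (h k).2 q hq⟩
  loc := fun x hx y hy C hxy h => ⟨h.1, fun q hq => (good_qf q).loc x hx y hy C hxy (h.2 q hq)⟩

lemma good_himp {X : Set (Ω → E)} (b c : CondPow P X) :
    Good P X (fun x C => MeasurableSet C ∧ ∀ D, MeasurableSet D →
      (∀ᵐ ω ∂P, ω ∈ D → ω ∈ C) → qf b x D → qf c x D) where
  meas := fun x _ C h => h.1
  empty := fun x hx => ⟨MeasurableSet.empty, fun D hD hDe _ =>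
    (good_qf c).mono x hx ∅ D ((good_qf c).empty x hx) hD hDe⟩
  mono := fun x hx C D h hD hDC => ⟨hD, fun G hG hGD hb => h.2 G hG (by
    filter_upwards [hDC, hGD] with ω a b c using a (b c)) hb⟩
  union := fun x hx C h => by
    refine ⟨MeasurableSet.iUnion fun k => (h k).1, fun D hD hDC hb => ?_⟩
    refine (good_qf c).mono x hx (⋃ k, D ∩ C k) D ((good_qf c).union x hx _ fun k => ?_) hD ?_
    · have hm := hD.inter (h k).1
      exact (h k).2 _ hm (Eventually.of_forall fun ω hω => hω.2)
        ((good_qf b).mono x hx D _ hb hm (Eventually.of_forall fun ω hω => hω.1))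
    · filter_upwards [hDC] with ω a hd
      obtain ⟨k, hk⟩ := mem_iUnion.1 (a hd)
      exact mem_iUnion.2 ⟨k, hd, hk⟩
  loc := fun x hx y hy C hxy h => by
    refine ⟨h.1, fun D hD hDC hb => ?_⟩
    have hxyD : ∀ᵐ ω ∂P, ω ∈ D → x ω = y ω := by
      filter_upwards [hxy, hDC] with ω a b c using a (b c)
    have hyxD : ∀ᵐ ω ∂P, ω ∈ D → y ω = x ω := by
      filter_upwards [hxyD] with ω a b using (a b).symm
    exact (good_qf c).loc x hx y hy D hxyD
      (h.2 D hD hDC ((good_qf b).loc y hy x hx D hyxD hb))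

/-- The order on the conditional power set via forcing. -/
abbrev powOrder (P : @Measure Ω mΩ) (X : Set (Ω → E)) : PartialOrder (CondPow P X) where
  le a b := ∀ x ∈ X, ∀ C, qf a x C → qf b x C
  le_refl a := fun _ _ _ h => h
  le_trans a b c h1 h2 := fun x hx C h => h2 x hx C (h1 x hx C h)
  le_antisymm a b h1 h2 := by
    induction a using Quot.ind with
    | mk S =>
      induction b using Quot.ind with
      | mk T => exact Quot.sound ⟨cle_of_forces S.2 h1, cle_of_forces T.2 h2⟩

open Classical in
/-- The complete lattice structure on the conditional power set. -/
abbrev powLattice [IsProbabilityMeasure P] {X : Set (Ω → E)} (hX : Stable P X) :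
    CompleteLattice (CondPow P X) :=
  letI := powOrder P X
  letI : InfSet (CondPow P X) := ⟨fun s => (realize_q hX (good_inf s)).choose⟩
  completeLatticeOfInf (CondPow P X) (fun s => by
    have hs := (realize_q hX (good_inf s)).choose_spec
    constructor
    · intro q hq x hx C h
      exact ((hs x hx C).1 h).2 q hq
    · intro r hr x hx C h
      exact (hs x hx C).2 ⟨(good_qf r).meas x hx C h, fun q hq => hr hq x hx C h⟩)

/-- The same complete lattice, with the expected bottom and top. -/
abbrev powLattice' [IsProbabilityMeasure P] {X : Set (Ω → E)} (hX : Stable P X) :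
    CompleteLattice (CondPow P X) :=
  { powLattice hX with
    bot := Quot.mk _ (⟨cbot X, hX, subset_rfl, MeasurableSet.empty⟩ : CondSub P X)
    top := Quot.mk _ (⟨ctop X, hX, subset_rfl, MeasurableSet.univ⟩ : CondSub P X)
    bot_le := by
      intro a x hx C h
      obtain ⟨hm, h1, -⟩ := h
      exact (good_qf a).mono x hx ∅ C ((good_qf a).empty x hx) hm h1
    le_top := by
      intro a x hx C h
      exact ⟨(good_qf a).meas x hx C h, by simp [ctop], x, hx, by simp⟩ }

lemma qf_inf [IsProbabilityMeasure P] {X : Set (Ω → E)} (hX : Stable P X)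
    (a b : CondPow P X) (x : Ω → E) (hx : x ∈ X) (C : Set Ω) :
    qf ((powLattice' hX).inf a b) x C ↔ qf a x C ∧ qf b x C := by
  refine ((realize_q hX (good_inf {a, b})).choose_spec x hx C).trans ?_
  constructor
  · rintro ⟨_, h⟩
    exact ⟨h a (by simp), h b (by simp)⟩
  · rintro ⟨h1, h2⟩
    refine ⟨(good_qf a).meas x hx C h1, ?_⟩
    rintro q (rfl | rfl)
    exacts [h1, h2]

/-- The Heyting algebra structure. -/
abbrev powHeyting [IsProbabilityMeasure P] {X : Set (Ω → E)} (hX : Stable P X) :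
    HeytingAlgebra (CondPow P X) :=
  { powLattice' hX with
    himp := fun b c => (realize_q hX (good_himp b c)).choose
    compl := fun b => (realize_q hX (good_himp b (powLattice' hX).bot)).choose
    himp_bot := fun a => rfl
    le_himp_iff := by
      intro a b c
      have hs := (realize_q hX (good_himp b c)).choose_spec
      constructor
      · intro h x hx C hab
        obtain ⟨ha, hb⟩ := (qf_inf hX a b x hx C).1 hab
        exact ((hs x hx C).1 (h x hx C ha)).2 C ((good_qf a).meas x hx C ha) (by simp) hb
      · intro h x hx C ha
        refine (hs x hx C).2 ⟨(good_qf a).meas x hx C ha, fun D hD hDC hb => ?_⟩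
        exact h x hx D ((qf_inf hX a b x hx D).2 ⟨(good_qf a).mono x hx C D ha hD hDC, hb⟩) }

lemma pow_compl_compl [IsProbabilityMeasure P] {X : Set (Ω → E)} (hX : Stable P X)
    (a : CondPow P X) : (powHeyting hX).compl ((powHeyting hX).compl a) = a := by
  letI := powHeyting hX
  refine le_antisymm ?_ (le_compl_compl (a := a))
  intro x hx C hC
  have h1 := (realize_q hX (good_himp a (powLattice' hX).bot)).choose_spec
  have h2 := (realize_q hX (good_himp ((powHeyting hX).compl a) (powLattice' hX).bot)).choose_spec
  obtain ⟨hCm, hC2⟩ := (h2 x hx C).1 hC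
  obtain ⟨D, hD, hmax⟩ := exhaust (P := P) {D | qf a x D} ⟨∅, (good_qf a).empty x hx⟩
    (fun D hD => (good_qf a).meas x hx D hD)
  have hU := (good_qf a).union x hx D hD
  have hUm := (good_qf a).meas x hx _ hU
  have hdiff : qf ((powHeyting hX).compl a) x (C \ ⋃ k, D k) := by
    refine (h1 x hx _).2 ⟨hCm.diff hUm, fun G hG hGC ha => ?_⟩
    refine ⟨hG, ?_, x, hx, by simp⟩
    filter_upwards [hGC, hmax G ha] with ω u v w
    exact absurd (v w) (u w).2
  obtain ⟨-, h0, -⟩ := hC2 _ (hCm.diff hUm) (Eventually.of_forall fun ω hω => hω.1) hdiff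
  refine (good_qf a).mono x hx _ C hU hCm ?_
  filter_upwards [h0] with ω u v
  by_contra hw
  exact u ⟨v, hw⟩

end Helpers

/-- **Theorem 2.9 / Corollary (DJKK13).**  For a stable set `X` of functions on `Ω`,
the conditional power set `P(X)`, ordered by conditional inclusion `⊑`, is a
complete, complemented, distributive lattice; equivalently, equipped with the
conditional union, conditional intersection and conditional complement, with least
element `{∗} = X|∅` and greatest element `X = X|Ω`, it is a complete Boolean
algebra. -/
theorem condPow_completeBooleanAlgebra
    {Ω E : Type*} {mΩ : MeasurableSpace Ω} (P : @Measure Ω mΩ)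
    [IsProbabilityMeasure P] (X : Set (Ω → E)) (hX : Stable P X) :
    ∃ inst : CompleteBooleanAlgebra (CondPow P X),
      (∀ a b : CondPow P X, inst.le a b ↔ qle P X a b) ∧
      inst.bot = Quot.mk _ (⟨cbot X, hX, subset_rfl, MeasurableSet.empty⟩ : CondSub P X) ∧
      inst.top = Quot.mk _ (⟨ctop X, hX, subset_rfl, MeasurableSet.univ⟩ : CondSub P X) := by
  letI H : HeytingAlgebra (CondPow P X) := powHeyting hX
  let B : BooleanAlgebra (CondPow P X) :=
    BooleanAlgebra.ofRegular (fun a => pow_compl_compl hX (a ⊔ aᶜ))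
  refine ⟨{ powLattice' hX, B with }, ?_, rfl, rfl⟩
  intro a b
  constructor
  · rintro h S T rfl rfl
    exact cle_of_forces S.2 h
  · intro h
    induction a using Quot.ind with
    | mk S =>
      induction b using Quot.ind with
      | mk T => exact fun x hx C hC => (h S T rfl rfl).forces hC

end CondMT
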